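/- There exists a voting method whose domain is the set of all profiles with at most 5 candidates that satisfies anonymity, neutrality, binary quasi-resoluteness, binary γ, and α-resoluteness. -/

import Mathlib

/- Formalization of voting-theoretic notions from Holliday, Norman, Pacuit, Zahedian,
"Impossibility theorems involving weakenings of expansion consistency and resoluteness
in voting". Candidates form an infinite type `C` and voters an infinite type `V`. -/

open Classical

noncomputable section

/-- `L` is a strict linear order on exactly the finite set `s`. -/
def IsStrictLinearOrderOn {C : Type} (s : Finset C) (L : C → C → Prop) : Prop :=
  (∀ x, ¬ L x x) ∧ (∀ x y z, L x y → L y z → L x z) ∧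
    (∀ x ∈ s, ∀ y ∈ s, x ≠ y → L x y ∨ L y x) ∧ ∀ x y, L x y → x ∈ s ∧ y ∈ s

/-- Restriction of a relation to a finite set `A`. -/
def restrictRel {C : Type} (A : Finset C) (L : C → C → Prop) : C → C → Prop :=
  fun x y => L x y ∧ x ∈ A ∧ y ∈ A

theorem IsStrictLinearOrderOn.restrict {C : Type} {s A : Finset C} {L : C → C → Prop}
    (h : IsStrictLinearOrderOn s L) (hA : A ⊆ s) :
    IsStrictLinearOrderOn A (restrictRel A L) := by
  obtain ⟨hirr, htr, htot, hdom⟩ := h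
  refine ⟨fun x hx => hirr x hx.1,
    fun x y z hxy hyz => ⟨htr _ _ _ hxy.1 hyz.1, hxy.2.1, hyz.2.2⟩, ?_,
    fun x y hxy => ⟨hxy.2.1, hxy.2.2⟩⟩
  intro x hx y hy hne
  rcases htot x (hA hx) y (hA hy) hne with h' | h'
  · exact Or.inl ⟨h', hx, hy⟩
  · exact Or.inr ⟨h', hy, hx⟩

/-- The image of a relation under the transposition of `a` and `b`. -/
def swapRel {C : Type} (a b : C) (L : C → C → Prop) : C → C → Prop :=
  fun x y => L (Equiv.swap a b x) (Equiv.swap a b y)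

theorem IsStrictLinearOrderOn.swapRel_mem {C : Type} {s : Finset C} {L : C → C → Prop}
    (a b : C) (h : IsStrictLinearOrderOn s L) :
    IsStrictLinearOrderOn (s.image (Equiv.swap a b)) (swapRel a b L) := by
  obtain ⟨hirr, htr, htot, hdom⟩ := h
  refine ⟨fun x => hirr _, fun x y z hxy hyz => htr _ _ _ hxy hyz, ?_, ?_⟩
  · intro x hx y hy hne
    obtain ⟨x', hx', rfl⟩ := Finset.mem_image.mp hx
    obtain ⟨y', hy', rfl⟩ := Finset.mem_image.mp hy
    have hne' : x' ≠ y' := by rintro rfl; exact hne rfl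
    have := htot x' hx' y' hy' hne'
    simpa [swapRel, Equiv.swap_apply_self] using this
  · intro x y hxy
    obtain ⟨h1, h2⟩ := hdom _ _ hxy
    exact ⟨Finset.mem_image.mpr ⟨_, h1, Equiv.swap_apply_self a b x⟩,
      Finset.mem_image.mpr ⟨_, h2, Equiv.swap_apply_self a b y⟩⟩

/-- A preference profile: each voter in the finite set `voters` submits a strict linear
order of the finite nonempty set `cands` of candidates. -/
structure Profile (C V : Type) where
  voters : Finset V
  cands : Finset C
  cands_nonempty : cands.Nonempty
  ballot : V → C → C → Prop
  ballot_lin : ∀ i ∈ voters, IsStrictLinearOrderOn cands (ballot i)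

namespace Profile

variable {C V : Type}

/-- The margin of `x` over `y` in `P`: the number of voters ranking `x` above `y`
minus the number of voters ranking `y` above `x`. -/
def margin (P : Profile C V) (x y : C) : ℤ :=
  ((P.voters.filter (fun i => P.ballot i x y)).card : ℤ) -
    ((P.voters.filter (fun i => P.ballot i y x)).card : ℤ)

/-- The profile `P^{i⇄j}` obtained by transposing the voters `i` and `j`. -/
def swapVoters (P : Profile C V) (i j : V) : Profile C V where
  voters := P.voters.image (Equiv.swap i j)
  cands := P.cands
  cands_nonempty := P.cands_nonempty
  ballot := fun k => P.ballot (Equiv.swap i j k)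
  ballot_lin := by
    intro k hk
    obtain ⟨m, hm, rfl⟩ := Finset.mem_image.mp hk
    simpa [Equiv.swap_apply_self] using P.ballot_lin m hm

/-- The profile `P_{a⇄b}` obtained by transposing the candidates `a` and `b`. -/
def swapCands (P : Profile C V) (a b : C) : Profile C V where
  voters := P.voters
  cands := P.cands.image (Equiv.swap a b)
  cands_nonempty := P.cands_nonempty.image _
  ballot := fun i => swapRel a b (P.ballot i)
  ballot_lin := fun i hi => (P.ballot_lin i hi).swapRel_mem a b

/-- The restriction `P|_A` of a profile to a nonempty subset `A` of its candidates. -/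
def restrict (P : Profile C V) (A : Finset C) (hA : A.Nonempty) (hsub : A ⊆ P.cands) :
    Profile C V where
  voters := P.voters
  cands := A
  cands_nonempty := hA
  ballot := fun i => restrictRel A (P.ballot i)
  ballot_lin := fun i hi => (P.ballot_lin i hi).restrict hsub

/-- The profile `P_{-y}`, i.e. `P` with the candidate `y` removed. -/
def minus (P : Profile C V) (y : C) (h : (P.cands.erase y).Nonempty) : Profile C V :=
  P.restrict (P.cands.erase y) h (P.cands.erase_subset y)

/-- The profile `P|_{{x,y}}`, i.e. `P` restricted to the two candidates `x` and `y`. -/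
def pair (P : Profile C V) (x y : C) (hx : x ∈ P.cands) (hy : y ∈ P.cands) : Profile C V :=
  P.restrict {x, y} ⟨x, Finset.mem_insert_self x {y}⟩
    (by
      intro z hz
      rcases Finset.mem_insert.mp hz with rfl | hz
      · exact hx
      · rcases Finset.mem_singleton.mp hz with rfl
        exact hy)

/-- `P` is uniquely weighted: no two distinct ordered pairs of distinct candidates
have the same margin. -/
def UniquelyWeighted (P : Profile C V) : Prop :=
  ∀ a ∈ P.cands, ∀ b ∈ P.cands, ∀ x ∈ P.cands, ∀ y ∈ P.cands,
    a ≠ b → x ≠ y → (a, b) ≠ (x, y) → P.margin a b ≠ P.margin x y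

/-- `P` is uniquely ranked: in every subelection with at least two candidates, no two
candidates have the same number of `n`-th place votes, and no two candidates have the
same Borda score. -/
def UniquelyRanked (P : Profile C V) : Prop :=
  ∀ Y ⊆ P.cands, 2 ≤ Y.card →
    ((∀ n : ℕ, 1 ≤ n → n ≤ Y.card → ∀ x ∈ Y, ∀ y ∈ Y, x ≠ y →
        (P.voters.filter
            (fun i => (Y.filter (fun z => P.ballot i z x)).card = n - 1)).card ≠
          (P.voters.filter
            (fun i => (Y.filter (fun z => P.ballot i z y)).card = n - 1)).card) ∧
      (∀ x ∈ Y, ∀ y ∈ Y, x ≠ y →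
        (∑ i ∈ P.voters, (Y.filter (fun z => P.ballot i x z)).card) ≠
          ∑ i ∈ P.voters, (Y.filter (fun z => P.ballot i y z)).card))

/-- `Q` is an `n`-fold copy `nP` of `P`: same candidates, and there is a map sending
the voters of `Q` onto the voters of `P` such that each voter of `P` has exactly `n`
preimages, each with the same ballot. -/
def IsCopy (Q P : Profile C V) (n : ℕ) : Prop :=
  Q.cands = P.cands ∧
    ∃ h : V → V,
      (∀ j ∈ Q.voters, h j ∈ P.voters) ∧
      (∀ i ∈ P.voters, (Q.voters.filter (fun j => h j = i)).card = n) ∧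
      (∀ j ∈ Q.voters, Q.ballot j = P.ballot (h j))

/-- `Q` is obtained from `P` by deleting one voter with each linear order of the
candidates of `P`. -/
def IsCancelOf (Q P : Profile C V) : Prop :=
  Q.cands = P.cands ∧ Q.voters ⊆ P.voters ∧
    (∀ j ∈ Q.voters, Q.ballot j = P.ballot j) ∧
    ∀ L : C → C → Prop, IsStrictLinearOrderOn P.cands L →
      ((P.voters \ Q.voters).filter (fun i => P.ballot i = L)).card = 1

end Profile

/-- A voting method: a function assigning to each profile in a nonempty domain a
nonempty set of winners among its candidates. -/
structure VotingMethod (C V : Type) where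
  dom : Set (Profile C V)
  dom_nonempty : dom.Nonempty
  winners : Profile C V → Finset C
  winners_nonempty : ∀ P ∈ dom, (winners P).Nonempty
  winners_sub : ∀ P ∈ dom, winners P ⊆ P.cands

namespace VotingMethod

variable {C V : Type}

/-- Anonymity: transposing two voters does not change the winners. -/
def Anonymous (F : VotingMethod C V) : Prop :=
  ∀ P ∈ F.dom, ∀ i j : V, P.swapVoters i j ∈ F.dom →
    F.winners (P.swapVoters i j) = F.winners P

/-- Neutrality: transposing two candidates transposes the winners accordingly. -/
def Neutral (F : VotingMethod C V) : Prop :=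
  ∀ P ∈ F.dom, ∀ a b : C, P.swapCands a b ∈ F.dom →
    F.winners (P.swapCands a b) = (F.winners P).image (Equiv.swap a b)

/-- Binary resoluteness: a unique winner in any two-candidate profile. -/
def BinaryResolute (F : VotingMethod C V) : Prop :=
  ∀ P ∈ F.dom, P.cands.card = 2 → (F.winners P).card = 1

/-- Binary quasi-resoluteness: a unique winner in any two-candidate profile whose
two distinct candidates have a nonzero margin between them. -/
def BinaryQuasiResolute (F : VotingMethod C V) : Prop :=
  ∀ P ∈ F.dom, P.cands.card = 2 →
    (∀ x ∈ P.cands, ∀ y ∈ P.cands, x ≠ y → P.margin x y ≠ 0) →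
    (F.winners P).card = 1

/-- Quasi-resoluteness: a unique winner in any uniquely weighted profile. -/
def QuasiResolute (F : VotingMethod C V) : Prop :=
  ∀ P ∈ F.dom, P.UniquelyWeighted → (F.winners P).card = 1

/-- Weak quasi-resoluteness: a unique winner in any profile that is both uniquely
weighted and uniquely ranked. -/
def WeakQuasiResolute (F : VotingMethod C V) : Prop :=
  ∀ P ∈ F.dom, P.UniquelyWeighted → P.UniquelyRanked → (F.winners P).card = 1

/-- Binary γ: if `x` wins without `y` and wins the head-to-head against `y`,
then `x` wins with `y` included. -/
def BinaryGamma (F : VotingMethod C V) : Prop :=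
  ∀ P ∈ F.dom, ∀ x, ∀ hx : x ∈ P.cands, ∀ y, ∀ hy : y ∈ P.cands, x ≠ y →
    ∀ h : (P.cands.erase y).Nonempty,
      P.minus y h ∈ F.dom → P.pair x y hx hy ∈ F.dom →
      x ∈ F.winners (P.minus y h) → F.winners (P.pair x y hx hy) = {x} →
      x ∈ F.winners P

/-- α-resoluteness: if `x` wins without `y` and wins the head-to-head against `y`,
then adding `y` does not enlarge the set of winners. -/
def AlphaResolute (F : VotingMethod C V) : Prop :=
  ∀ P ∈ F.dom, ∀ x, ∀ hx : x ∈ P.cands, ∀ y, ∀ hy : y ∈ P.cands, x ≠ y →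
    ∀ h : (P.cands.erase y).Nonempty,
      P.minus y h ∈ F.dom → P.pair x y hx hy ∈ F.dom →
      x ∈ F.winners (P.minus y h) → F.winners (P.pair x y hx hy) = {x} →
      (F.winners P).card ≤ (F.winners (P.minus y h)).card

/-- Homogeneity: replacing each voter by `n` copies of that voter does not change
the winners. -/
def Homogeneous (F : VotingMethod C V) : Prop :=
  ∀ P ∈ F.dom, ∀ Q ∈ F.dom, ∀ n : ℕ, 0 < n → Q.IsCopy P n → F.winners Q = F.winners P

/-- Cancellativity: deleting one voter with each linear order of the candidates does
not change the winners. -/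
def Cancellative (F : VotingMethod C V) : Prop :=
  ∀ P ∈ F.dom, ∀ Q ∈ F.dom, Q.IsCancelOf P → F.winners Q = F.winners P

/-- Majoritarianism: the winners depend only on the majority graph of the profile. -/
def Majoritarian (F : VotingMethod C V) : Prop :=
  ∀ P ∈ F.dom, ∀ P' ∈ F.dom, P.cands = P'.cands →
    (∀ x ∈ P.cands, ∀ y ∈ P.cands, (0 < P.margin x y ↔ 0 < P'.margin x y)) →
    F.winners P = F.winners P'

/-- Pairwiseness: the winners depend only on the margin graph of the profile. -/
def Pairwise (F : VotingMethod C V) : Prop :=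
  ∀ P ∈ F.dom, ∀ P' ∈ F.dom, P.cands = P'.cands →
    (∀ x ∈ P.cands, ∀ y ∈ P.cands, P.margin x y = P'.margin x y) →
    F.winners P = F.winners P'

end VotingMethod

/-!
The winners are determined by the strict majority relation. Suppose that `x` wins without `y` and
beats `y`. The undominated candidates win if there are any: then adding `y`, which `x` beats, leaves
`x` undominated if it was, and makes nobody undominated. If nobody is undominated, then neither is
anybody after the removal of `y`. With at most four candidates, the winners are then those with the
most majority wins and those beating all of the latter. The only case is that of a three-cycle, all
of whose members win, and adding `y` cannot make all four candidates win. With five candidates, the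
winners are those forced by binary γ, if any, so that only α-resoluteness is left to check: some `z`
other than `y` beats `x` and some `u` other than `y` beats `z`, and with these two comparisons and
that of `x` with `y` fixed, the other seven are checked exhaustively.
-/

section Rule

open Finset

variable {α β : Type*}

section Definitions

variable (R : α → α → Prop) [DecidableRel R] (s : Finset α)

/-- The weak Condorcet winners of `s`, where `R` is the strict majority relation. -/
def undominated : Finset α := {x ∈ s | ∀ y ∈ s, ¬ R y x}

/-- The number of majority wins of `x` against members of `s`. -/
def victories (x : α) : ℕ := #{y ∈ s | R x y}

/-- The members of `s` with the most majority wins within `s`. -/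
def champions : Finset α := {x ∈ s | s.sup (victories R s) ≤ victories R s x}

variable [DecidableEq α]

/-- The champions of `s`, together with the candidates that beat every champion. -/
def contenders : Finset α := champions R s ∪ {y ∈ s | ∀ x ∈ champions R s, R y x}

/-- The winners among at most four candidates: the undominated ones or, if there are none,
the contenders. -/
def coreWinners : Finset α :=
  if (undominated R s).Nonempty then undominated R s else contenders R s

/-- The candidates that binary γ forces to win in `s`, given that `coreWinners` selects the winners
after the removal of any one candidate. -/
def forcedWinners : Finset α := s.biUnion fun y => {x ∈ coreWinners R (s.erase y) | R x y}

/-- The winners among at most five candidates: the forced winners, if there are any, among five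
candidates without undominated ones, and the core winners otherwise. -/
def majorityWinners : Finset α :=
  if undominated R s = ∅ ∧ 4 < #s ∧ (forcedWinners R s).Nonempty then forcedWinners R s
  else coreWinners R s

end Definitions

section Basic

variable {R : α → α → Prop} [DecidableRel R] {s : Finset α} {x y : α}

theorem mem_undominated : x ∈ undominated R s ↔ x ∈ s ∧ ∀ y ∈ s, ¬ R y x := mem_filter

theorem exists_beats_of_undominated_eq_empty (h : undominated R s = ∅) (hx : x ∈ s) :
    ∃ y ∈ s, R y x := by
  by_contra! hx'
  exact notMem_empty x (h ▸ mem_undominated.2 ⟨hx, hx'⟩)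

theorem mem_champions : x ∈ champions R s ↔ x ∈ s ∧ ∀ y ∈ s, victories R s y ≤ victories R s x := by
  simp [champions]

theorem champions_subset : champions R s ⊆ s := filter_subset _ _

variable [DecidableEq α]

theorem mem_contenders :
    x ∈ contenders R s ↔ x ∈ champions R s ∨ x ∈ s ∧ ∀ y ∈ champions R s, R x y := by
  simp [contenders]

theorem champions_subset_contenders : champions R s ⊆ contenders R s := subset_union_left

theorem contenders_subset : contenders R s ⊆ s :=
  union_subset champions_subset (filter_subset _ _)

theorem contenders_nonempty (hs : s.Nonempty) : (contenders R s).Nonempty := by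
  obtain ⟨x, hx, hmax⟩ := s.exists_max_image (victories R s) hs
  exact ⟨x, champions_subset_contenders (mem_champions.2 ⟨hx, hmax⟩)⟩

theorem coreWinners_eq_undominated (h : (undominated R s).Nonempty) :
    coreWinners R s = undominated R s := if_pos h

theorem coreWinners_eq_contenders (h : undominated R s = ∅) :
    coreWinners R s = contenders R s := if_neg (by simp [h])

theorem coreWinners_subset : coreWinners R s ⊆ s := by
  unfold coreWinners
  split_ifs
  exacts [filter_subset _ _, contenders_subset]

theorem coreWinners_nonempty (hs : s.Nonempty) : (coreWinners R s).Nonempty := by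
  unfold coreWinners
  split_ifs with h
  exacts [h, contenders_nonempty hs]

theorem mem_forcedWinners :
    x ∈ forcedWinners R s ↔ ∃ y ∈ s, x ∈ coreWinners R (s.erase y) ∧ R x y := by
  simp [forcedWinners]

theorem forcedWinners_subset : forcedWinners R s ⊆ s := fun _ hx =>
  let ⟨_, _, hx', _⟩ := mem_forcedWinners.1 hx
  mem_of_mem_erase (coreWinners_subset hx')

theorem majorityWinners_subset : majorityWinners R s ⊆ s := by
  unfold majorityWinners
  split_ifs
  exacts [forcedWinners_subset, coreWinners_subset]

theorem majorityWinners_nonempty (hs : s.Nonempty) : (majorityWinners R s).Nonempty := by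
  unfold majorityWinners
  split_ifs with h
  exacts [h.2.2, coreWinners_nonempty hs]

theorem majorityWinners_eq_undominated (h : (undominated R s).Nonempty) :
    majorityWinners R s = undominated R s := by
  rw [majorityWinners, if_neg fun h' => h.ne_empty h'.1, coreWinners_eq_undominated h]

theorem majorityWinners_eq_coreWinners (hs : #s ≤ 4) : majorityWinners R s = coreWinners R s :=
  if_neg fun h => hs.not_gt h.2.1

theorem majorityWinners_eq_forcedWinners (h : undominated R s = ∅) (hs : 4 < #s)
    (hF : (forcedWinners R s).Nonempty) : majorityWinners R s = forcedWinners R s :=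
  if_pos ⟨h, hs, hF⟩

theorem undominated_subset_undominated_erase (hx : x ∈ s) (hxy : R x y) :
    undominated R s ⊆ undominated R (s.erase y) := by
  intro w hw
  obtain ⟨hws, hw⟩ := mem_undominated.1 hw
  exact mem_undominated.2 ⟨mem_erase.2 ⟨fun hwy => hw x hx (hwy ▸ hxy), hws⟩,
    fun z hz => hw z (mem_of_mem_erase hz)⟩

end Basic

section Equivariance

variable {R : α → α → Prop} [DecidableRel R] {S : β → β → Prop} [DecidableRel S]
  {s : Finset α} (f : α ↪ β)

theorem undominated_map (h : ∀ a ∈ s, ∀ b ∈ s, S (f a) (f b) ↔ R a b) :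
    undominated S (s.map f) = (undominated R s).map f := by
  rw [undominated, undominated, filter_map]
  congr 1
  refine filter_congr fun x hx => ?_
  simp only [Function.comp_apply, forall_mem_map]
  exact forall₂_congr fun y hy => not_congr (h y hy x hx)

theorem victories_map (h : ∀ a ∈ s, ∀ b ∈ s, S (f a) (f b) ↔ R a b) {x : α} (hx : x ∈ s) :
    victories S (s.map f) (f x) = victories R s x := by
  rw [victories, victories, filter_map, card_map]
  exact congrArg card (filter_congr fun y hy => h x hx y hy)

theorem champions_map (h : ∀ a ∈ s, ∀ b ∈ s, S (f a) (f b) ↔ R a b) :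
    champions S (s.map f) = (champions R s).map f := by
  have hsup : (s.map f).sup (victories S (s.map f)) = s.sup (victories R s) := by
    rw [sup_map]
    exact sup_congr rfl fun x hx => victories_map f h hx
  rw [champions, champions, filter_map, hsup]
  congr 1
  refine filter_congr fun x hx => ?_
  rw [Function.comp_apply, victories_map f h hx]

variable [DecidableEq α] [DecidableEq β]

theorem contenders_map (h : ∀ a ∈ s, ∀ b ∈ s, S (f a) (f b) ↔ R a b) :
    contenders S (s.map f) = (contenders R s).map f := by
  rw [contenders, contenders, champions_map f h, filter_map, map_union]
  congr 2
  refine filter_congr fun y hy => ?_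
  simp only [Function.comp_apply, forall_mem_map]
  exact forall₂_congr fun x hx => h y hy x (champions_subset hx)

theorem coreWinners_map (h : ∀ a ∈ s, ∀ b ∈ s, S (f a) (f b) ↔ R a b) :
    coreWinners S (s.map f) = (coreWinners R s).map f := by
  simp only [coreWinners, undominated_map f h, contenders_map f h, map_nonempty]
  exact (apply_ite (map f) _ _ _).symm

theorem forcedWinners_map (h : ∀ a ∈ s, ∀ b ∈ s, S (f a) (f b) ↔ R a b) :
    forcedWinners S (s.map f) = (forcedWinners R s).map f := by
  simp only [forcedWinners, map_eq_image, image_biUnion, biUnion_image]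
  refine biUnion_congr rfl fun y hy => ?_
  simp only [← map_eq_image]
  rw [← map_erase, coreWinners_map f fun a ha b hb =>
    h a (mem_of_mem_erase ha) b (mem_of_mem_erase hb), filter_map]
  congr 1
  exact filter_congr fun x hx => h x (mem_of_mem_erase (coreWinners_subset hx)) y hy

theorem majorityWinners_map (h : ∀ a ∈ s, ∀ b ∈ s, S (f a) (f b) ↔ R a b) :
    majorityWinners S (s.map f) = (majorityWinners R s).map f := by
  simp only [majorityWinners, undominated_map f h, forcedWinners_map f h, coreWinners_map f h,
    map_eq_empty, card_map, map_nonempty]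
  exact (apply_ite (map f) _ _ _).symm

theorem majorityWinners_congr {S : α → α → Prop} [DecidableRel S]
    (h : ∀ a ∈ s, ∀ b ∈ s, S a b ↔ R a b) : majorityWinners S s = majorityWinners R s := by
  simpa using majorityWinners_map (.refl α) h

end Equivariance

section Expansion

variable {R : α → α → Prop} [DecidableRel R] [Std.Asymm R] {s : Finset α} {x y : α}

theorem victories_add_two_le (h : undominated R s = ∅) (hx : x ∈ s) :
    victories R s x + 2 ≤ #s := by
  obtain ⟨z, hz, hzx⟩ := exists_beats_of_undominated_eq_empty h hx
  have hne : x ≠ z := ne_of_irrefl' hzx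
  have hsub : {w ∈ s | R x w} ⊆ s \ {x, z} := by
    intro w hw
    obtain ⟨hws, hxw⟩ := mem_filter.1 hw
    simp only [mem_sdiff, mem_insert, mem_singleton, not_or]
    exact ⟨hws, (ne_of_irrefl hxw).symm, fun hwz => asymm hxw (hwz ▸ hzx)⟩
  have hpair : {x, z} ⊆ s := by simp [insert_subset_iff, hx, hz]
  have hcard := card_le_card hsub
  have hle := card_le_card hpair
  rw [card_sdiff_of_subset hpair] at hcard
  rw [card_pair hne] at hcard hle
  rw [victories]
  omega

theorem exists_beats_of_card_eq_three (hs : #s = 3) (h : undominated R s = ∅) (hx : x ∈ s) :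
    ∃ y ∈ s, R x y := by
  by_contra! hx'
  obtain ⟨y, z, -, hyz⟩ := card_eq_two.1 (show #(s.erase x) = 2 by rw [card_erase_of_mem hx, hs])
  have hmem (w : α) : w ∈ s ↔ w = x ∨ w = y ∨ w = z := by
    rw [← insert_erase hx, hyz, mem_insert, mem_insert, mem_singleton]
  have hbeaten {v w : α} (hv : v ∈ s) (hs' : ∀ u ∈ s, u = x ∨ u = v ∨ u = w) : R w v := by
    obtain ⟨u, hu, huv⟩ := exists_beats_of_undominated_eq_empty h hv
    obtain rfl | rfl | rfl := hs' u hu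
    exacts [absurd huv (hx' v hv), absurd huv (irrefl u), huv]
  have hzy : R z y := hbeaten (by simp [hmem]) fun u hu => (hmem u).1 hu
  have hyz : R y z := hbeaten (by simp [hmem]) fun u hu => ((hmem u).1 hu).imp_right Or.symm
  exact asymm hzy hyz

variable [DecidableEq α]

theorem mem_undominated_of_mem_undominated_erase (hx : x ∈ undominated R (s.erase y))
    (hxy : R x y) : x ∈ undominated R s := by
  obtain ⟨hxs, hx⟩ := mem_undominated.1 hx
  refine mem_undominated.2 ⟨mem_of_mem_erase hxs, fun z hz => ?_⟩
  obtain rfl | hzy := eq_or_ne z y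
  exacts [asymm hxy, hx z (mem_erase.2 ⟨hzy, hz⟩)]

theorem contenders_eq_self_of_card_eq_three (hs : #s = 3) (h : undominated R s = ∅) :
    contenders R s = s := by
  refine contenders_subset.antisymm fun x hx => champions_subset_contenders ?_
  obtain ⟨y, hy, hxy⟩ := exists_beats_of_card_eq_three hs h hx
  have hpos : 0 < victories R s x := card_pos.2 ⟨y, mem_filter.2 ⟨hy, hxy⟩⟩
  refine mem_champions.2 ⟨hx, fun z hz => ?_⟩
  have := victories_add_two_le h hz
  omega

theorem two_le_victories_of_card_eq_four (hs : #s = 4) (hy : y ∈ s)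
    (h : undominated R (s.erase y) = ∅) (hx : x ∈ s.erase y) (hxy : R x y) :
    2 ≤ victories R s x := by
  have ht : #(s.erase y) = 3 := by rw [card_erase_of_mem hy, hs]
  obtain ⟨z, hz, hxz⟩ := exists_beats_of_card_eq_three ht h hx
  rw [← card_pair (ne_of_mem_erase hz)]
  exact card_le_card (by simp [insert_subset_iff, mem_of_mem_erase hz, hxz, hy, hxy])

theorem mem_champions_of_card_eq_four (hs : #s = 4) (hy : y ∈ s) (h : undominated R s = ∅)
    (h' : undominated R (s.erase y) = ∅) (hx : x ∈ s.erase y) (hxy : R x y) :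
    x ∈ champions R s := by
  refine mem_champions.2 ⟨mem_of_mem_erase hx, fun z hz => ?_⟩
  have hx2 := two_le_victories_of_card_eq_four hs hy h' hx hxy
  have hz2 := victories_add_two_le h hz
  omega

/-- If everyone were a contender, then the three-cycle `s.erase y` would consist of champions only,
each with a second win, hence a win over `y`; but the champion `y` must win as well. -/
theorem card_contenders_le_three_of_card_eq_four (hs : #s = 4) (hy : y ∈ s)
    (h : undominated R s = ∅) (h' : undominated R (s.erase y) = ∅) (hx : x ∈ s.erase y)
    (hxy : R x y) : #(contenders R s) ≤ 3 := by
  by_contra! hcard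
  have hall : contenders R s = s := eq_of_subset_of_card_le contenders_subset (by omega)
  have hyc : y ∈ champions R s := by
    refine (mem_contenders.1 (hall.symm ▸ hy)).resolve_right fun hy' => ?_
    exact asymm hxy (hy'.2 x (mem_champions_of_card_eq_four hs hy h h' hx hxy))
  have herase : ∀ w ∈ s.erase y, w ∈ champions R s := fun w hw =>
    (mem_contenders.1 (hall.symm ▸ mem_of_mem_erase hw)).elim id fun hw' =>
      mem_champions_of_card_eq_four hs hy h h' hw (hw'.2 y hyc)
  have htwo {w : α} (hw : w ∈ champions R s) : 2 ≤ victories R s w :=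
    (two_le_victories_of_card_eq_four hs hy h' hx hxy).trans
      ((mem_champions.1 hw).2 x (mem_of_mem_erase hx))
  obtain ⟨w, hw⟩ := card_pos.1 (zero_lt_two.trans_le (htwo hyc))
  obtain ⟨hws, hyw⟩ := mem_filter.1 hw
  have hwt : w ∈ s.erase y := mem_erase.2 ⟨(ne_of_irrefl hyw).symm, hws⟩
  have hvict : victories R (s.erase y) w = victories R s w := by
    rw [victories, victories, filter_erase, erase_eq_of_notMem (by simp [asymm hyw])]
  have := victories_add_two_le h' hwt
  have := htwo (herase w hwt)
  have := card_erase_of_mem hy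
  omega

end Expansion

section FiveCandidates

/-- The sign of the majority comparison of `x` with `y`, where `R` is the strict majority
relation. -/
def majoritySign (R : α → α → Prop) [DecidableRel R] (x y : α) : SignType :=
  if R x y then 1 else if R y x then -1 else 0

/-- The skew-symmetric table of majority comparisons between five candidates such that `0` beats
`4`, `1` beats `0` and `2` beats `1`, where `a`, `b`, `c`, `d` and `e`, `f`, `g` are the remaining
comparisons not involving, respectively involving, the candidate `4`. -/
def signTable (a b c d e f g : SignType) : List (List SignType) :=
  [[0, -1, a, b, 1], [1, 0, -1, c, e], [-a, 1, 0, d, f], [-b, -c, -d, 0, g], [-1, -e, -f, -g, 0]]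

/-- The strict majority relation given by a table of comparisons. -/
def TableBeats (T : List (List SignType)) (i j : Fin 5) : Prop := (T.getD i []).getD j 0 = 1

instance (T : List (List SignType)) : DecidableRel (TableBeats T) :=
  fun _ _ => inferInstanceAs (Decidable (_ = _))

set_option maxRecDepth 10000 in
-- Setting `e`, `f`, `g` to `0` in the premises discards most choices of `a`, `b`, `c`, `d` before
-- `e`, `f`, `g` are enumerated.
theorem card_forcedWinners_signTable_le (a b c d : SignType) :
    undominated (TableBeats (signTable a b c d 0 0 0)) (univ.erase 4) = ∅ →
    0 ∈ contenders (TableBeats (signTable a b c d 0 0 0)) (univ.erase 4) →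
    ∀ e f g, #(forcedWinners (TableBeats (signTable a b c d e f g)) univ) ≤
      #(contenders (TableBeats (signTable a b c d 0 0 0)) (univ.erase 4)) := by
  revert a b c d
  decide +kernel

variable {R : α → α → Prop} [DecidableRel R]

theorem majoritySign_eq_one {x y : α} : majoritySign R x y = 1 ↔ R x y := by
  unfold majoritySign
  split_ifs <;> simp [*]

variable [Std.Asymm R]

theorem majoritySign_self (x : α) : majoritySign R x x = 0 := by
  simp [majoritySign, irrefl x]

theorem neg_majoritySign (x y : α) : -majoritySign R x y = majoritySign R y x := by
  unfold majoritySign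
  split_ifs with hxy hyx
  · exact absurd hyx (asymm hxy)
  all_goals rfl

theorem tableBeats_signTable_iff (f : Fin 5 → α) (h04 : R (f 0) (f 4)) (h10 : R (f 1) (f 0))
    (h21 : R (f 2) (f 1)) (i j : Fin 5) :
    TableBeats (signTable (majoritySign R (f 0) (f 2)) (majoritySign R (f 0) (f 3))
      (majoritySign R (f 1) (f 3)) (majoritySign R (f 2) (f 3)) (majoritySign R (f 1) (f 4))
      (majoritySign R (f 2) (f 4)) (majoritySign R (f 3) (f 4))) i j ↔ R (f i) (f j) := by
  rw [← majoritySign_eq_one (R := R), TableBeats]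
  have h40 : majoritySign R (f 4) (f 0) = -1 := by
    rw [← neg_majoritySign, majoritySign_eq_one.2 h04]
  have h01 : majoritySign R (f 0) (f 1) = -1 := by
    rw [← neg_majoritySign, majoritySign_eq_one.2 h10]
  have h12 : majoritySign R (f 1) (f 2) = -1 := by
    rw [← neg_majoritySign, majoritySign_eq_one.2 h21]
  refine Eq.congr ?_ rfl
  fin_cases i <;> fin_cases j <;>
    simp [signTable, neg_majoritySign, majoritySign_self, h40, h01, h12,
      majoritySign_eq_one.2 h04, majoritySign_eq_one.2 h10, majoritySign_eq_one.2 h21]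

theorem tableBeats_signTable_zero (a b c d e f g : SignType) :
    ∀ i ∈ univ.erase 4, ∀ j ∈ univ.erase 4,
      (TableBeats (signTable a b c d e f g) i j ↔ TableBeats (signTable a b c d 0 0 0) i j) := by
  intro i hi j hj
  fin_cases i <;> fin_cases j <;> first | rfl | simp at hi hj

theorem exists_embedding_of_card_eq_five [DecidableEq α] {s : Finset α} {x y : α} (hs : #s = 5)
    (hx : x ∈ s.erase y) (hy : y ∈ s) (h : undominated R (s.erase y) = ∅) :
    ∃ f : Fin 5 ↪ α, univ.map f = s ∧ f 0 = x ∧ f 4 = y ∧ R (f 1) (f 0) ∧ R (f 2) (f 1) := by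
  obtain ⟨z, hz, hzx⟩ := exists_beats_of_undominated_eq_empty h hx
  obtain ⟨u, hu, huz⟩ := exists_beats_of_undominated_eq_empty h hz
  have hux : u ≠ x := fun hux => asymm huz (hux ▸ hzx)
  have hcard : #((((s.erase y).erase x).erase z).erase u) = 1 := by
    grind [ne_of_irrefl hzx, ne_of_irrefl huz]
  obtain ⟨v, hv⟩ := card_eq_one.1 hcard
  have hv' := hv ▸ mem_singleton_self v
  simp only [mem_erase] at hx hz hu hv'
  have hinj : Function.Injective ![x, z, u, v, y] := by
    rw [← List.nodup_ofFn]
    simp [hx, hz, hu, hv', hux, Ne.symm, ne_of_irrefl' hzx, ne_of_irrefl' huz]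
  have hmem (i : Fin 5) : ![x, z, u, v, y] i ∈ s := by
    fin_cases i
    exacts [hx.2, hz.2, hu.2, hv'.2.2.2.2, hy]
  refine ⟨⟨_, hinj⟩, eq_of_subset_of_card_le ?_ (by simp [hs]), rfl, rfl, hzx, huz⟩
  simpa [subset_iff] using hmem

theorem card_forcedWinners_le_of_card_eq_five [DecidableEq α] {s : Finset α} {x y : α}
    (hs : #s = 5) (hy : y ∈ s) (h : undominated R (s.erase y) = ∅)
    (hx : x ∈ contenders R (s.erase y)) (hxy : R x y) :
    #(forcedWinners R s) ≤ #(contenders R (s.erase y)) := by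
  obtain ⟨f, rfl, rfl, rfl, h10, h21⟩ :=
    exists_embedding_of_card_eq_five hs (contenders_subset hx) hy h
  have hR (i : Fin 5) (_ : i ∈ univ) (j : Fin 5) (_ : j ∈ univ) :=
    (tableBeats_signTable_iff f hxy h10 h21 i j).symm
  have hR' (i : Fin 5) (hi : i ∈ univ.erase 4) (j : Fin 5) (hj : j ∈ univ.erase 4) :=
    (hR i (mem_univ i) j (mem_univ j)).trans (tableBeats_signTable_zero _ _ _ _ _ _ _ i hi j hj)
  rw [← map_erase] at h hx ⊢
  rw [undominated_map f hR', map_eq_empty] at h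
  rw [contenders_map f hR', mem_map'] at hx
  rw [forcedWinners_map f hR, contenders_map f hR', card_map, card_map]
  exact card_forcedWinners_signTable_le _ _ _ _ h hx _ _ _

end FiveCandidates

section Winners

variable [DecidableEq α] {R : α → α → Prop} [DecidableRel R] [Std.Asymm R]
  {s : Finset α} {x y : α}

theorem majorityWinners_pair_eq_singleton_iff (hxy : x ≠ y) :
    majorityWinners R {x, y} = {x} ↔ R x y := by
  constructor
  · intro h
    by_contra hR
    have hy : y ∈ undominated R {x, y} := by simp [mem_undominated, hR, irrefl]
    rw [majorityWinners_eq_undominated ⟨y, hy⟩] at h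
    exact hxy (mem_singleton.1 (h ▸ hy)).symm
  · intro hR
    have hU : undominated R {x, y} = {x} := by
      ext z
      simp only [mem_undominated, mem_insert, mem_singleton, forall_eq_or_imp, forall_eq]
      constructor
      · rintro ⟨rfl | rfl, hz, -⟩
        exacts [rfl, absurd hR hz]
      · rintro rfl
        exact ⟨.inl rfl, irrefl z, asymm hR⟩
    rw [majorityWinners_eq_undominated (by simp [hU]), hU]

theorem undominated_erase_eq_empty (h : undominated R s = ∅) (hx : x ∈ coreWinners R (s.erase y))
    (hxy : R x y) : undominated R (s.erase y) = ∅ := by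
  by_contra! hne
  rw [coreWinners_eq_undominated hne] at hx
  exact notMem_empty x (h ▸ mem_undominated_of_mem_undominated_erase hx hxy)

theorem mem_majorityWinners_and_card_le_of_undominated_nonempty (h : (undominated R s).Nonempty)
    (hx : x ∈ majorityWinners R (s.erase y)) (hxy : R x y) :
    x ∈ majorityWinners R s ∧ #(majorityWinners R s) ≤ #(majorityWinners R (s.erase y)) := by
  have hsub := undominated_subset_undominated_erase
    (mem_of_mem_erase (majorityWinners_subset hx)) hxy
  rw [majorityWinners_eq_undominated (h.mono hsub)] at hx ⊢
  rw [majorityWinners_eq_undominated h]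
  exact ⟨mem_undominated_of_mem_undominated_erase hx hxy, card_le_card hsub⟩

theorem mem_coreWinners_and_card_le_of_card_le_four (h : undominated R s = ∅) (hs : #s ≤ 4)
    (hy : y ∈ s) (hx : x ∈ coreWinners R (s.erase y)) (hxy : R x y) :
    x ∈ coreWinners R s ∧ #(coreWinners R s) ≤ #(coreWinners R (s.erase y)) := by
  have h' := undominated_erase_eq_empty h hx hxy
  rw [coreWinners_eq_contenders h'] at hx ⊢
  rw [coreWinners_eq_contenders h]
  have hxt := contenders_subset hx
  have hcard := card_erase_add_one hy
  obtain ⟨w, hw, hwx⟩ := exists_beats_of_undominated_eq_empty h' hxt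
  have hw' := victories_add_two_le h' hw
  have hpos : 0 < victories R (s.erase y) w := card_pos.2 ⟨x, mem_filter.2 ⟨hxt, hwx⟩⟩
  have hs4 : #s = 4 := by omega
  rw [contenders_eq_self_of_card_eq_three (by omega) h', card_erase_of_mem hy, hs4]
  exact ⟨champions_subset_contenders (mem_champions_of_card_eq_four hs4 hy h h' hxt hxy),
    card_contenders_le_three_of_card_eq_four hs4 hy h h' hxt hxy⟩

theorem mem_majorityWinners_and_card_le_of_card_eq_five (h : undominated R s = ∅) (hs : #s = 5)
    (hy : y ∈ s) (hx : x ∈ coreWinners R (s.erase y)) (hxy : R x y) :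
    x ∈ majorityWinners R s ∧ #(majorityWinners R s) ≤ #(coreWinners R (s.erase y)) := by
  have h' := undominated_erase_eq_empty h hx hxy
  have hforced := mem_forcedWinners.2 ⟨y, hy, hx, hxy⟩
  rw [coreWinners_eq_contenders h'] at hx ⊢
  rw [majorityWinners_eq_forcedWinners h (by omega) ⟨x, hforced⟩]
  exact ⟨hforced, card_forcedWinners_le_of_card_eq_five hs hy h' hx hxy⟩

theorem mem_majorityWinners_and_card_le (hs : #s ≤ 5) (hy : y ∈ s)
    (hx : x ∈ majorityWinners R (s.erase y)) (hxy : R x y) :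
    x ∈ majorityWinners R s ∧ #(majorityWinners R s) ≤ #(majorityWinners R (s.erase y)) := by
  obtain h | h := (undominated R s).eq_empty_or_nonempty
  · have hcard := card_erase_add_one hy
    rw [majorityWinners_eq_coreWinners (show #(s.erase y) ≤ 4 by omega)] at hx ⊢
    obtain hs4 | hs5 := Nat.le_or_eq_of_le_succ hs
    · rw [majorityWinners_eq_coreWinners hs4]
      exact mem_coreWinners_and_card_le_of_card_le_four h hs4 hy hx hxy
    · exact mem_majorityWinners_and_card_le_of_card_eq_five h hs5 hy hx hxy
  · exact mem_majorityWinners_and_card_le_of_undominated_nonempty h hx hxy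

end Winners

end Rule

namespace Profile

variable {C V : Type} (P : Profile C V)

/-- The strict majority relation of `P`. -/
def Beats (x y : C) : Prop := 0 < P.margin x y

theorem neg_margin (x y : C) : -P.margin x y = P.margin y x := neg_sub _ _

instance : Std.Asymm P.Beats where
  asymm x y hxy hyx := by
    have := P.neg_margin x y
    unfold Beats at hxy hyx
    omega

theorem margin_swapVoters (i j : V) (x y : C) : (P.swapVoters i j).margin x y = P.margin x y := by
  have hcard (x y : C) : ((P.swapVoters i j).voters.filter
      fun k => (P.swapVoters i j).ballot k x y).card =
        (P.voters.filter fun k => P.ballot k x y).card := by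
    refine (Finset.card_equiv (Equiv.swap i j) fun k => ?_).symm
    rw [Finset.mem_filter, Finset.mem_filter]
    simp [swapVoters]
  rw [margin, margin, hcard, hcard]

theorem margin_swapCands (a b x y : C) :
    (P.swapCands a b).margin (Equiv.swap a b x) (Equiv.swap a b y) = P.margin x y := by
  simp [margin, swapCands, swapRel]

variable {P} {A : Finset C} {x y : C}

theorem margin_restrict (hA : A.Nonempty) (hsub : A ⊆ P.cands) (hx : x ∈ A) (hy : y ∈ A) :
    (P.restrict A hA hsub).margin x y = P.margin x y := by
  simp [margin, restrict, restrictRel, hx, hy]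

theorem majorityWinners_restrict (hA : A.Nonempty) (hsub : A ⊆ P.cands) :
    majorityWinners (P.restrict A hA hsub).Beats A = majorityWinners P.Beats A :=
  majorityWinners_congr fun _ ha _ hb => by rw [Beats, Beats, margin_restrict hA hsub ha hb]

end Profile

namespace VotingMethod

variable {C V : Type}

theorem Majoritarian.anonymous {F : VotingMethod C V} (hF : F.Majoritarian) : F.Anonymous :=
  fun P hP i j hP' => hF _ hP' P hP rfl fun x _ y _ => by rw [P.margin_swapVoters]

variable (C V) [Nonempty C]

/-- The voting method choosing the `majorityWinners` of the strict majority relation, for profiles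
with at most five candidates. -/
def fiveCandidate : VotingMethod C V where
  dom := {P | P.cands.card ≤ 5}
  dom_nonempty := ⟨⟨∅, {Classical.arbitrary C}, by simp, fun _ _ _ => False, by simp⟩, by simp⟩
  winners P := majorityWinners P.Beats P.cands
  winners_nonempty P _ := majorityWinners_nonempty P.cands_nonempty
  winners_sub _ _ := majorityWinners_subset

theorem fiveCandidate_majoritarian : (fiveCandidate C V).Majoritarian := by
  intro P _ Q _ hcands hmargin
  simp only [fiveCandidate, ← hcands]
  exact majorityWinners_congr (R := Q.Beats) (S := P.Beats) hmargin

theorem fiveCandidate_neutral : (fiveCandidate C V).Neutral := by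
  intro P _ a b _
  have hbeats (x y : C) :
      (P.swapCands a b).Beats (Equiv.swap a b x) (Equiv.swap a b y) ↔ P.Beats x y := by
    rw [Profile.Beats, Profile.Beats, P.margin_swapCands]
  have hcands : (P.swapCands a b).cands = P.cands.map (Equiv.swap a b).toEmbedding := by
    ext; simp [Profile.swapCands, -Finset.mem_map_equiv]
  simp only [fiveCandidate, hcands]
  rw [majorityWinners_map _ fun x _ y _ => hbeats x y]
  ext; simp [-Finset.mem_map_equiv]

theorem fiveCandidate_binaryQuasiResolute : (fiveCandidate C V).BinaryQuasiResolute := by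
  intro P _ hcard hmargin
  obtain ⟨x, y, hxy, hP⟩ := Finset.card_eq_two.1 hcard
  refine Finset.card_eq_one.2 ?_
  simp only [fiveCandidate, hP]
  obtain h | h := (hmargin x (by simp [hP]) y (by simp [hP]) hxy).lt_or_gt
  · refine ⟨y, Finset.pair_comm x y ▸ (majorityWinners_pair_eq_singleton_iff hxy.symm).2 ?_⟩
    rw [Profile.Beats, ← P.neg_margin]
    exact neg_pos.2 h
  · exact ⟨x, (majorityWinners_pair_eq_singleton_iff hxy).2 h⟩

variable {C V}

theorem mem_fiveCandidate_winners_and_card_le {P : Profile C V} {x y : C}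
    (hP : P ∈ (fiveCandidate C V).dom) (hx : x ∈ P.cands) (hy : y ∈ P.cands) (hxy : x ≠ y)
    (h : (P.cands.erase y).Nonempty) (hminus : x ∈ (fiveCandidate C V).winners (P.minus y h))
    (hpair : (fiveCandidate C V).winners (P.pair x y hx hy) = {x}) :
    x ∈ (fiveCandidate C V).winners P ∧
      ((fiveCandidate C V).winners P).card ≤
        ((fiveCandidate C V).winners (P.minus y h)).card := by
  have hminus_eq : (fiveCandidate C V).winners (P.minus y h) =
      majorityWinners P.Beats (P.cands.erase y) := Profile.majorityWinners_restrict _ _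
  have hpair_eq : (fiveCandidate C V).winners (P.pair x y hx hy) =
      majorityWinners P.Beats {x, y} := Profile.majorityWinners_restrict _ _
  rw [hminus_eq] at hminus ⊢
  rw [hpair_eq, majorityWinners_pair_eq_singleton_iff hxy] at hpair
  exact mem_majorityWinners_and_card_le hP hy hminus hpair

theorem fiveCandidate_binaryGamma : (fiveCandidate C V).BinaryGamma :=
  fun _ hP _ hx _ hy hxy h _ _ hminus hpair =>
    (mem_fiveCandidate_winners_and_card_le hP hx hy hxy h hminus hpair).1

theorem fiveCandidate_alphaResolute : (fiveCandidate C V).AlphaResolute :=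
  fun _ hP _ hx _ hy hxy h _ _ hminus hpair =>
    (mem_fiveCandidate_winners_and_card_le hP hx hy hxy h hminus hpair).2

end VotingMethod

theorem exists_voting_method_five_candidates_general (C V : Type) [Nonempty C] :
    ∃ F : VotingMethod C V,
      F.dom = {P : Profile C V | P.cands.card ≤ 5} ∧
      F.Majoritarian ∧ F.Anonymous ∧ F.Neutral ∧ F.BinaryQuasiResolute ∧ F.BinaryGamma ∧
      F.AlphaResolute :=
  ⟨.fiveCandidate C V, rfl, VotingMethod.fiveCandidate_majoritarian C V,
    (VotingMethod.fiveCandidate_majoritarian C V).anonymous, VotingMethod.fiveCandidate_neutral C V,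
    VotingMethod.fiveCandidate_binaryQuasiResolute C V, VotingMethod.fiveCandidate_binaryGamma,
    VotingMethod.fiveCandidate_alphaResolute⟩

/-- There exists a voting method whose domain is the set of all
profiles with at most 5 candidates that satisfies anonymity, neutrality, binary
quasi-resoluteness, binary γ, and α-resoluteness. -/
theorem exists_voting_method_five_candidates (C V : Type) [Infinite C] [Infinite V] :
    ∃ F : VotingMethod C V,
      F.dom = {P : Profile C V | P.cands.card ≤ 5} ∧
      F.Anonymous ∧ F.Neutral ∧ F.BinaryQuasiResolute ∧ F.BinaryGamma ∧
      F.AlphaResolute := by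
  obtain ⟨F, hdom, -, hF⟩ := exists_voting_method_five_candidates_general C V
  exact ⟨F, hdom, hF⟩
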